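/- arXiv:1712.09121 — 3 statements merged into one kernel-verified Lean document; each statement's English description precedes it below -/
import Mathlib

section
/- Let V be a finite vertex set, let w' be a weight function on V with values in ℕ ∪ {∞}, let s ∈ V, and suppose d_{w'}(s,v) < ∞ for every v ∈ V. Let w be a weight function with the same edges as w' such that for every edge (u,v) one has w(u,v) = 2·w'(u,v) + b(u,v) for some b(u,v) ∈ {0,1}, and define ℓ(u,v) = 2·d_{w'}(s,u) + w(u,v) − 2·d_{w'}(s,v) for every edge (u,v). Then for every vertex t ∈ V, d_w(s,t) = 2·d_{w'}(s,t) + d_ℓ(s,t). -/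
/-!
Put `d v = 2 * d_{w'}(s, v)`, a finite potential with `d s = 0`. Since `d_{w'}(s, ·)` satisfies the
triangle inequality along edges (`dist_le_add`) and `2 * w' ≤ w`, the truncated subtraction defining
`ℓ` is a genuine one, so `d u + w u v = ℓ u v + d v` for every pair `(u, v)`, with both sides
infinite on non-edges. Along a walk from `s` to `t` this telescopes (`walkLen_potential`) to
`w`-length `= ℓ`-length `+ d t`. As `w` and `ℓ` have the same edges, they have the same paths, and
taking the infimum over paths gives the claim.
-/

open scoped ENNReal ENat

namespace Paper

variable {V : Type*} {α : Type*}

/-- The length of a walk `l` (a list of vertices) under weight `w`: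
the sum of the weights of consecutive pairs. -/
def walkLen [AddCommMonoid α] (w : V → V → α) (l : List V) : α :=
  ((l.zip l.tail).map fun p => w p.1 p.2).sum

/-- `l` is a path from `s` to `t` in the weighted digraph `w`: nonempty,
starts at `s`, ends at `t`, and every consecutive pair is an edge (finite weight). -/
def IsPathFrom [AddCommMonoid α] [CompleteLattice α]
    (w : V → V → α) (s t : V) (l : List V) : Prop :=
  l ≠ [] ∧ l.head? = some s ∧ l.getLast? = some t ∧ l.Chain' (fun u v => w u v ≠ ⊤)

/-- The distance from `s` to `t`: the infimum of lengths of paths from `s` to `t`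
(`⊤` if there is no path). -/
noncomputable def dist [AddCommMonoid α] [CompleteLattice α]
    (w : V → V → α) (s t : V) : α :=
  sInf {x | ∃ l, IsPathFrom w s t l ∧ walkLen w l = x}

/-- The `h`-hop distance from `s` to `t`: the infimum of lengths of paths
from `s` to `t` with at most `h` hops. -/
noncomputable def hdist [AddCommMonoid α] [CompleteLattice α]
    (h : ℕ) (w : V → V → α) (s t : V) : α :=
  sInf {x | ∃ l, IsPathFrom w s t l ∧ l.length ≤ h + 1 ∧ walkLen w l = x}

theorem walkLen_cons_cons [AddCommMonoid α] (w : V → V → α) (a b : V) (l : List V) :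
    walkLen w (a :: b :: l) = w a b + walkLen w (b :: l) := by
  simp [walkLen]

theorem walkLen_concat [AddCommMonoid α] (w : V → V → α) (v : V) :
    ∀ (l : List V) (u : V), l.getLast? = some u →
      walkLen w (l ++ [v]) = walkLen w l + w u v
  | [], u, h => by simp at h
  | [a], u, h => by
      obtain rfl : a = u := by simpa using h
      simp [walkLen]
  | a :: b :: l, u, h => by
      have ih := walkLen_concat w v (b :: l) u (by simpa using h)
      simp only [List.cons_append] at ih ⊢
      rw [walkLen_cons_cons, walkLen_cons_cons, ih, add_assoc]

theorem dist_le_walkLen {w : V → V → ℕ∞} {s t : V} {l : List V} (h : IsPathFrom w s t l) :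
    dist w s t ≤ walkLen w l :=
  sInf_le ⟨l, h, rfl⟩

/-- A finite distance is attained by some path, because `ℕ∞` is well-ordered. -/
theorem exists_path {w : V → V → ℕ∞} {s t : V} (h : dist w s t ≠ ⊤) :
    ∃ l, IsPathFrom w s t l ∧ walkLen w l = dist w s t := by
  have hne : {x | ∃ l, IsPathFrom w s t l ∧ walkLen w l = x}.Nonempty := by
    by_contra hn
    rw [Set.not_nonempty_iff_eq_empty] at hn
    exact h (by rw [dist, hn, sInf_empty])
  exact csInf_mem hne

theorem dist_self (w : V → V → ℕ∞) (s : V) : dist w s s = 0 := by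
  have h : IsPathFrom w s s [s] := by simp [IsPathFrom, List.Chain']
  have := dist_le_walkLen h
  simpa [walkLen] using this

/-- The triangle inequality along a single (possibly absent) edge. -/
theorem dist_le_add (w : V → V → ℕ∞) (s u v : V) :
    dist w s v ≤ dist w s u + w u v := by
  by_cases he : w u v = ⊤
  · simp [he]
  by_cases hd : dist w s u = ⊤
  · simp [hd]
  obtain ⟨l, ⟨hl, hh, ht, hc⟩, hlen⟩ := exists_path hd
  rw [← hlen, ← walkLen_concat w v l u ht]
  refine dist_le_walkLen ⟨by simp, ?_, by simp, ?_⟩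
  · simp [List.head?_append, hh]
  · refine List.isChain_append.2 ⟨hc, by simp, ?_⟩
    intro x hx y hy
    obtain rfl : u = x := by simpa [ht] using hx
    obtain rfl : v = y := by simpa using hy
    exact he

/-- Telescoping of a potential: if `w` and `ell` differ by the potential difference of `d` on every
pair, their lengths differ by the potential difference of the endpoints of a walk. -/
theorem walkLen_potential {w ell : V → V → ℕ∞} {d : V → ℕ∞}
    (h : ∀ u v, d u + w u v = ell u v + d v) :
    ∀ (l : List V) (a t : V), l.head? = some a → l.getLast? = some t →
      d a + walkLen w l = walkLen ell l + d t
  | [], a, t, ha, _ => by simp at ha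
  | [x], a, t, ha, ht => by
      obtain rfl : x = a := by simpa using ha
      obtain rfl : x = t := by simpa using ht
      simp [walkLen]
  | x :: y :: l, a, t, ha, ht => by
      obtain rfl : x = a := by simpa using ha
      have ih := walkLen_potential h (y :: l) y t (by simp) (by simpa using ht)
      rw [walkLen_cons_cons, walkLen_cons_cons, ← add_assoc, h, add_assoc, ih, add_assoc]

/-- Under the scaling setup, with the reduced weight
`ℓ(u,v) = 2·d_{w'}(s,u) + w(u,v) − 2·d_{w'}(s,v)` on edges (and `⊤` on non-edges),
one has `d_w(s,t) = 2·d_{w'}(s,t) + d_ℓ(s,t)` for every vertex `t`. -/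
theorem statement2 {V : Type*} [Fintype V]
    (w' w : V → V → ℕ∞) (s : V)
    (hfin : ∀ v : V, dist w' s v ≠ ⊤)
    (hedges : ∀ u v : V, w u v = ⊤ ↔ w' u v = ⊤)
    (b : V → V → ℕ) (hb : ∀ u v : V, b u v ≤ 1)
    (hw : ∀ u v : V, w' u v ≠ ⊤ → w u v = 2 * w' u v + (b u v : ℕ∞))
    (ell : V → V → ℕ∞)
    (hell : ∀ u v : V, ell u v = if w u v = ⊤ then ⊤ else
      ((2 * (dist w' s u).toNat + (w u v).toNat - 2 * (dist w' s v).toNat : ℕ) : ℕ∞)) :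
    ∀ t : V, dist w s t = 2 * dist w' s t + dist ell s t := by
  have hdist : ∀ v, ((dist w' s v).toNat : ℕ∞) = dist w' s v := fun v =>
    ENat.natCast_toNat (hfin v)
  have hpot : ∀ u v, 2 * dist w' s u + w u v = ell u v + 2 * dist w' s v := by
    intro u v
    rw [hell]
    split_ifs with htop
    · simp [htop]
    · have htop' : w' u v ≠ ⊤ := fun h => htop ((hedges u v).2 h)
      have htri := dist_le_add w' s u v
      have hwv := hw u v htop'
      rw [← hdist u, ← hdist v] at htri ⊢
      lift w' u v to ℕ using htop' with c
      lift w u v to ℕ using htop with e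
      simp only [ENat.toNat_natCast]
      norm_cast at htri hwv ⊢
      omega
  have htel : ∀ t l, l.head? = some s → l.getLast? = some t →
      walkLen w l = 2 * dist w' s t + walkLen ell l := by
    intro t l h1 h2
    have h := walkLen_potential (d := fun v => 2 * dist w' s v) hpot l s t h1 h2
    simpa [dist_self, add_comm] using h
  have htop : ∀ u v, ell u v ≠ ⊤ ↔ w u v ≠ ⊤ := by
    intro u v
    rw [hell]
    split_ifs with h
    · simp [h]
    · exact iff_of_true (ENat.natCast_ne_top _) h
  have hpath : ∀ t l, IsPathFrom ell s t l ↔ IsPathFrom w s t l := by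
    intro t l
    simp only [IsPathFrom, htop]
  intro t
  apply le_antisymm
  · by_cases hd : dist ell s t = ⊤
    · simp [hd]
    · obtain ⟨l, hl, hlen⟩ := exists_path hd
      rw [← hlen, ← htel t l hl.2.1 hl.2.2.1]
      exact dist_le_walkLen ((hpath t l).1 hl)
  · refine le_sInf ?_
    rintro x ⟨l, hl, rfl⟩
    rw [htel t l hl.2.1 hl.2.2.1]
    gcongr
    exact dist_le_walkLen ((hpath t l).2 hl)

end Paper
end

section
/- Let V be a finite vertex set, let w be a weight function on V with values in ℕ ∪ {∞}, let s ∈ V, let V' ⊆ V with s ∈ V', and let h ≥ 1 be an integer. Let t ∈ V be such that there exists a path P = (s = v_0, v_1, …, v_m = t) from s to t of w-length d_w(s,t) < ∞ and an index i with m − h ≤ i ≤ m and v_i ∈ V'. Then d_w(s,t) = min over u' ∈ V' of ( d_w(s,u') + d_w^h(u',t) ). -/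
/-!
The inequality `≤` is the triangle inequality, since an `h`-hop path is in particular a path.
For `≥`, a shortest path from `s` to `t` is cut at its vertex `v_i ∈ V'`: the prefix bounds
`dist w s v_i`, the suffix has at most `h` hops and so bounds `hdist h w v_i t`, and the two
lengths add up to `dist w s t`. Both directions rest on the facts that path length is additive
(`walkLen_append_cons`) and that being a path splits (`isPathFrom_append_cons`) at a vertex.
-/

open scoped ENNReal ENat

namespace Paper

variable {V : Type*} {α : Type*}

/-- The length of a walk is additive when the walk is cut at one of its vertices. -/
theorem walkLen_append_cons [AddCommMonoid α] (w : V → V → α) (a b : List V) (v : V) :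
    walkLen w (a ++ v :: b) = walkLen w (a ++ [v]) + walkLen w (v :: b) := by
  induction a with
  | nil => simp [walkLen]
  | cons x a ih =>
    cases a with
    | nil => simp [walkLen]
    | cons y a =>
      simp only [walkLen, List.cons_append, List.tail_cons, List.zip_cons_cons, List.map_cons,
        List.sum_cons] at ih ⊢
      rw [ih, add_assoc]

/-- A list containing `v` is a path exactly when its two pieces, both containing the cut
vertex `v`, are paths. -/
theorem isPathFrom_append_cons [AddCommMonoid α] [CompleteLattice α] (w : V → V → α)
    (s t v : V) (a b : List V) :
    IsPathFrom w s t (a ++ v :: b) ↔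
      IsPathFrom w s v (a ++ [v]) ∧ IsPathFrom w v t (v :: b) := by
  have hchain : List.IsChain (fun u v => w u v ≠ ⊤) (a ++ v :: b) ↔
      List.IsChain (fun u v => w u v ≠ ⊤) (a ++ [v]) ∧
        List.IsChain (fun u v => w u v ≠ ⊤) (v :: b) :=
    List.isChain_split
  have hhead : (a ++ v :: b).head? = (a ++ [v]).head? := by cases a <;> simp
  have hlast : (a ++ v :: b).getLast? = (v :: b).getLast? := by
    simp [List.getLast?_append, List.getLast?_cons]
  unfold IsPathFrom List.Chain'
  rw [hchain, hhead, hlast]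
  simp
  tauto

theorem dist_le [AddCommMonoid α] [CompleteLattice α] {w : V → V → α} {s t : V} {l : List V}
    (hl : IsPathFrom w s t l) : dist w s t ≤ walkLen w l :=
  sInf_le ⟨l, hl, rfl⟩

theorem hdist_le [AddCommMonoid α] [CompleteLattice α] {w : V → V → α} {s t : V} {l : List V}
    {h : ℕ} (hl : IsPathFrom w s t l) (hlen : l.length ≤ h + 1) :
    hdist h w s t ≤ walkLen w l :=
  sInf_le ⟨l, hl, hlen, rfl⟩

/-- Triangle inequality through `u`: both infima, when finite, are attained since `ℕ∞` is
well-ordered, and the two optimal paths can be concatenated at `u`. -/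
theorem dist_le_dist_add_hdist (w : V → V → ℕ∞) (s t u : V) (h : ℕ) :
    dist w s t ≤ dist w s u + hdist h w u t := by
  rcases Set.eq_empty_or_nonempty {x | ∃ l, IsPathFrom w s u l ∧ walkLen w l = x} with h1 | h1
  · simp [dist, h1]
  rcases Set.eq_empty_or_nonempty
    {x | ∃ l, IsPathFrom w u t l ∧ l.length ≤ h + 1 ∧ walkLen w l = x} with h2 | h2
  · simp [hdist, h2]
  obtain ⟨p, hp, hpw⟩ := csInf_mem h1
  obtain ⟨q, hq, -, hqw⟩ := csInf_mem h2
  obtain ⟨a, rfl⟩ := List.getLast?_eq_some_iff.mp hp.2.2.1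
  obtain ⟨b, rfl⟩ := List.head?_eq_some_iff.mp hq.2.1
  calc dist w s t ≤ walkLen w (a ++ u :: b) :=
        dist_le ((isPathFrom_append_cons w s t u a b).mpr ⟨hp, hq⟩)
    _ = dist w s u + hdist h w u t := by
        rw [walkLen_append_cons, hpw, hqw]; rfl

/-- If some shortest path from `s` to `t` contains a vertex of `V'` among
its last `h+1` vertices, then `d_w(s,t) = min_{u' ∈ V'} ( d_w(s,u') + d_w^h(u',t) )`. -/
theorem statement10 {V : Type*} [Fintype V]
    (w : V → V → ℕ∞) (s t : V) (V' : Set V) (hs : s ∈ V') (h : ℕ) (hh : 1 ≤ h)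
    (hfin : dist w s t ≠ ⊤)
    (hpath : ∃ (l : List V) (i : ℕ), IsPathFrom w s t l ∧ walkLen w l = dist w s t ∧
      i < l.length ∧ l.length ≤ i + h + 1 ∧ l.getD i s ∈ V') :
    dist w s t = ⨅ u ∈ V', (dist w s u + hdist h w u t) := by
  apply le_antisymm
  · exact le_iInf₂ fun u _ => dist_le_dist_add_hdist w s t u h
  · obtain ⟨l, i, hl, hlw, hi, hlen, hmem⟩ := hpath
    rw [List.getD_eq_getElem _ _ hi] at hmem
    have hsplit : l = l.take i ++ l[i] :: l.drop (i + 1) := by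
      rw [List.getElem_cons_drop, List.take_append_drop]
    have hparts := hl
    rw [hsplit, isPathFrom_append_cons] at hparts
    -- the suffix has `l.length - i ≤ h + 1` vertices, that is, at most `h` hops
    have hsuf : (l[i] :: l.drop (i + 1)).length ≤ h + 1 := by
      simp only [List.length_cons, List.length_drop]
      omega
    calc ⨅ u ∈ V', (dist w s u + hdist h w u t)
        ≤ dist w s l[i] + hdist h w l[i] t := iInf₂_le _ hmem
      _ ≤ walkLen w (l.take i ++ [l[i]]) + walkLen w (l[i] :: l.drop (i + 1)) :=
          add_le_add (dist_le hparts.1) (hdist_le hparts.2 hsuf)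
      _ = walkLen w l := by rw [← walkLen_append_cons, ← hsplit]
      _ = dist w s t := hlw

end Paper
end

section
/- Let V be a finite vertex set with |V| = n ≥ 2, let w be a weight function on V with values in ℕ ∪ {∞}, let s, t ∈ V, let h ≥ 1 be an integer, and let ε be a rational with 0 < ε ≤ 1. For each i ∈ {0, 1, …, ⌈log₂(n−1)⌉}, define the weight function w'_i on the same edges by w'_i(u,v) = ⌈ 2·h·w(u,v) / (ε·2^i) ⌉. If d_w^h(s,t) ≤ n − 1 (in particular finite), then d_w^h(s,t) ≤ min over i ∈ {0, 1, …, ⌈log₂(n−1)⌉} of ( ε·2^i/(2h) )·d_{w'_i}^h(s,t) ≤ (1 + ε)·d_w^h(s,t). -/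
/-!
Rounding distorts each single edge by a controlled factor, and such edgewise bounds pass to hop
distances (`mul_hdist_le_mul_hdist`), because `w` and `w'_i` have the same edges and hence the same
paths. Write `c_i = ε·2^i/(2h)`, so that `w'_i = ⌈w / c_i⌉`.

* Lower bound: rounding up gives `w ≤ c_i · w'_i` on every edge, for every `i`.
* Upper bound: the index `i = 0` alone suffices. There `c_0 · w'_0 < w + c_0` and `c_0 ≤ ε`. Weights
  are natural numbers, so an edge has either weight `0`, which rounding keeps, or weight at least
  `1`, where the error `c_0 ≤ ε` is at most `ε · w`. Thus `c_0 · w'_0 ≤ (1 + ε) · w` on every edge.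
-/

open scoped ENNReal ENat

namespace Paper

variable {V : Type*} {α : Type*}

/-- Edgewise comparison of scaled weights carries over to every list of vertices. -/
theorem mul_walkLen_le_mul_walkLen {V : Type*} {w₁ w₂ : V → V → ℕ∞} {a b : ℝ≥0∞}
    (hab : ∀ u v, a * (w₁ u v : ℝ≥0∞) ≤ b * (w₂ u v : ℝ≥0∞)) (l : List V) :
    a * ((walkLen w₁ l : ℕ∞) : ℝ≥0∞) ≤ b * ((walkLen w₂ l : ℕ∞) : ℝ≥0∞) := by
  induction l with
  | nil => simp [walkLen]
  | cons x l ih =>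
    cases l with
    | nil => simp [walkLen]
    | cons y l =>
      have key : ∀ w : V → V → ℕ∞, walkLen w (x :: y :: l) = w x y + walkLen w (y :: l) := by
        intro w; simp [walkLen]
      rw [key, key, ENat.toENNReal_add, ENat.toENNReal_add, mul_add, mul_add]
      exact add_le_add (hab x y) ih

/-- Edgewise comparison of scaled weights carries over to hop distances, provided every edge of
`w₂` is an edge of `w₁`. The factor `b` must be nonzero since `0 * ⊤ = 0`. -/
theorem mul_hdist_le_mul_hdist {V : Type*} {w₁ w₂ : V → V → ℕ∞} {a b : ℝ≥0∞} (hb : b ≠ 0)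
    (hedge : ∀ u v, w₂ u v ≠ ⊤ → w₁ u v ≠ ⊤)
    (hab : ∀ u v, a * (w₁ u v : ℝ≥0∞) ≤ b * (w₂ u v : ℝ≥0∞)) (h : ℕ) (s t : V) :
    a * ((hdist h w₁ s t : ℕ∞) : ℝ≥0∞) ≤ b * ((hdist h w₂ s t : ℕ∞) : ℝ≥0∞) := by
  rcases Set.eq_empty_or_nonempty
    {x | ∃ l, IsPathFrom w₂ s t l ∧ l.length ≤ h + 1 ∧ walkLen w₂ l = x} with hS | hS
  · have : hdist h w₂ s t = ⊤ := by rw [hdist, hS, sInf_empty]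
    simp [this, ENNReal.mul_top hb]
  · -- `ℕ∞` is well-ordered, so the infimum is attained by some path.
    obtain ⟨l, ⟨hne, hs, ht, hc⟩, hl, hx⟩ := csInf_mem hS
    have hle : hdist h w₁ s t ≤ walkLen w₁ l :=
      sInf_le ⟨l, ⟨hne, hs, ht, List.IsChain.imp (fun u v => hedge u v) hc⟩, hl, rfl⟩
    have hx' : hdist h w₂ s t = walkLen w₂ l := hx.symm
    rw [hx']
    exact (mul_le_mul_right (ENat.toENNReal_le.2 hle) a).trans
      (mul_walkLen_le_mul_walkLen hab l)

/-- With `w'_i(u,v) = ⌈2·h·w(u,v)/(ε·2^i)⌉` on edges for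
`i ∈ {0,…,⌈log₂(n−1)⌉}`, if `d_w^h(s,t) ≤ n−1` then
`d_w^h(s,t) ≤ min_i (ε·2^i/(2h))·d_{w'_i}^h(s,t) ≤ (1+ε)·d_w^h(s,t)`. -/
theorem statement15 {V : Type*} [Fintype V] (hn : 2 ≤ Fintype.card V)
    (w : V → V → ℕ∞) (s t : V) (h : ℕ) (hh : 1 ≤ h)
    (ε : ℚ) (hε0 : 0 < ε) (hε1 : ε ≤ 1)
    (w' : ℕ → V → V → ℕ∞)
    (hw' : ∀ (i : ℕ) (u v : V), w' i u v = if w u v = ⊤ then ⊤ else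
      ((⌈(2 * h * (w u v).toNat : ℚ) / (ε * 2 ^ i)⌉₊ : ℕ) : ℕ∞))
    (hfin : hdist h w s t ≤ ((Fintype.card V - 1 : ℕ) : ℕ∞)) :
    ((hdist h w s t : ℕ∞) : ℝ≥0∞)
        ≤ (⨅ i ∈ Finset.range (Nat.clog 2 (Fintype.card V - 1) + 1),
            ENNReal.ofReal ((ε : ℝ) * 2 ^ i / (2 * h)) *
              ((hdist h (w' i) s t : ℕ∞) : ℝ≥0∞)) ∧
    (⨅ i ∈ Finset.range (Nat.clog 2 (Fintype.card V - 1) + 1),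
        ENNReal.ofReal ((ε : ℝ) * 2 ^ i / (2 * h)) *
          ((hdist h (w' i) s t : ℕ∞) : ℝ≥0∞))
      ≤ ENNReal.ofReal ((1 + ε : ℚ) : ℝ) * ((hdist h w s t : ℕ∞) : ℝ≥0∞) := by
  have hh0 : (0 : ℝ) < h := by exact_mod_cast hh
  have hε0' : (0 : ℝ) < ε := by exact_mod_cast hε0
  have htop : ∀ i u v, w u v = ⊤ ↔ w' i u v = ⊤ := by
    intro i u v
    rw [hw']
    split_ifs with hw <;> simp [hw]
  have hval : ∀ i u v (k : ℕ), w u v = k →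
      w' i u v = ((⌈(k : ℝ) / ((ε : ℝ) * 2 ^ i / (2 * h))⌉₊ : ℕ) : ℕ∞) := by
    intro i u v k hk
    have hcast : (k : ℝ) / ((ε : ℝ) * 2 ^ i / (2 * h))
        = (((2 * h * k : ℚ) / (ε * 2 ^ i) : ℚ) : ℝ) := by
      push_cast
      field_simp
    rw [hw', hk, if_neg (ENat.natCast_ne_top k), ENat.toNat_natCast, hcast,
      ← Int.ceil_toNat, ← Int.ceil_toNat, Rat.ceil_cast]
  constructor
  · refine le_iInf₂ fun i _ => ?_
    have hc : (0 : ℝ) < (ε : ℝ) * 2 ^ i / (2 * h) := by positivity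
    have hc' : ENNReal.ofReal ((ε : ℝ) * 2 ^ i / (2 * h)) ≠ 0 := by simpa using hc
    rw [← one_mul ((hdist h w s t : ℕ∞) : ℝ≥0∞)]
    refine mul_hdist_le_mul_hdist hc' (fun u v => mt (htop i u v).1) (fun u v => ?_) h s t
    rcases eq_or_ne (w u v) ⊤ with hw | hw
    · simp [(htop i u v).1 hw, ENNReal.mul_top hc']
    · obtain ⟨k, hk⟩ := ENat.ne_top_iff_exists.1 hw
      rw [hval i u v k hk.symm, ← hk, one_mul, ENat.toENNReal_coe, ENat.toENNReal_coe,
        ← ENNReal.ofReal_natCast, ← ENNReal.ofReal_natCast, ← ENNReal.ofReal_mul hc.le]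
      refine ENNReal.ofReal_le_ofReal ?_
      rw [← div_le_iff₀' hc]
      exact Nat.le_ceil _
  · -- The index `0` already gives the upper bound.
    refine (iInf₂_le 0 (by simp)).trans ?_
    have hc : (0 : ℝ) < (ε : ℝ) * 2 ^ 0 / (2 * h) := by positivity
    have hcε : (ε : ℝ) * 2 ^ 0 / (2 * h) ≤ ε := by
      have hh1 : (1 : ℝ) ≤ h := by exact_mod_cast hh
      rw [pow_zero, mul_one]
      exact div_le_self hε0'.le (by linarith)
    have h1 : (0 : ℝ) < ((1 + ε : ℚ) : ℝ) := by push_cast; positivity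
    have h1' : ENNReal.ofReal ((1 + ε : ℚ) : ℝ) ≠ 0 := by
      rw [Ne, ENNReal.ofReal_eq_zero, not_le]
      exact h1
    refine mul_hdist_le_mul_hdist h1' (fun u v => mt (htop 0 u v).2) (fun u v => ?_) h s t
    rcases eq_or_ne (w u v) ⊤ with hw | hw
    · simp only [hw, ENat.toENNReal_top, ENNReal.mul_top h1', le_top]
    · obtain ⟨k, hk⟩ := ENat.ne_top_iff_exists.1 hw
      rw [hval 0 u v k hk.symm, ← hk, ENat.toENNReal_coe, ENat.toENNReal_coe,
        ← ENNReal.ofReal_natCast, ← ENNReal.ofReal_natCast, ← ENNReal.ofReal_mul hc.le,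
        ← ENNReal.ofReal_mul h1.le]
      refine ENNReal.ofReal_le_ofReal ?_
      generalize (ε : ℝ) * 2 ^ 0 / (2 * h) = c at hc hcε
      rcases Nat.eq_zero_or_pos k with rfl | hk0
      · simp
      · -- `c · ⌈k / c⌉ < k + c ≤ k + ε ≤ (1 + ε) · k`, the last step because `k ≥ 1`.
        have hk1 : (1 : ℝ) ≤ k := by exact_mod_cast hk0
        have hceil := (Nat.ceil_lt_add_one (a := (k : ℝ) / c) (by positivity)).le
        have hmul : c * (⌈(k : ℝ) / c⌉₊ : ℝ) ≤ c * ((k : ℝ) / c + 1) :=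
          mul_le_mul_of_nonneg_left hceil hc.le
        rw [mul_add, mul_div_cancel₀ _ hc.ne', mul_one] at hmul
        push_cast
        nlinarith

end Paper
end
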